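/- arXiv:1801.10436 — 6 statements merged into one kernel-verified Lean document; each statement's English description precedes it below -/
import Mathlib

section
/- Let A = (Q,Σ,δ) be a DFA which is not synchronizing, and let B = (Q,Σ',δ') be an extension of A (Σ ⊆ Σ', δ' agrees with δ on Σ) which is synchronizing. Then B has a symbol a ∈ Σ' such that the DFA obtained from A by adding the symbol a with its transitions from B has strictly more synchronizing pairs of states than A. Here a pair {p,q} of distinct states of a DFA is a synchronizing pair if there exists a word w with pw = qw. -/
/-- The state reached from `q` after reading word `w` in a DFA with
transition function `δ`. -/
def dfaRun {Q σ : Type*} (δ : Q → σ → Q) (q : Q) (w : List σ) : Q :=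
  w.foldl δ q

/-- A word `w` is synchronizing for the DFA `δ`. -/
def IsSyncWord {Q σ : Type*} (δ : Q → σ → Q) (w : List σ) : Prop :=
  ∃ qs : Q, ∀ q : Q, dfaRun δ q w = qs

/-- `(p,q)` is a synchronizing pair of distinct states: some word merges them. -/
def SyncPair {Q σ : Type*} (δ : Q → σ → Q) (p q : Q) : Prop :=
  p ≠ q ∧ ∃ w : List σ, dfaRun δ p w = dfaRun δ q w

/-- The DFA obtained from `δ` by adding one extra symbol acting as `τ : Q → Q`;
its alphabet is `Option σ`, where `none` is the new symbol. -/
def addSymbol {Q σ : Type*} (δ : Q → σ → Q) (τ : Q → Q) : Q → Option σ → Q :=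
  fun q o => o.elim (τ q) (δ q)

/-!
If every pair of states of `A` could be merged, then merging the states one after another would
give a synchronizing word; so there is a pair `{p, q}` that no word of `A` merges. Follow its images
along a synchronizing word of `B`: they end up equal, so some letter `a` of that word carries a pair
`{r, s}` that `A` cannot merge to one that `A` can. Adding `a` to `A` keeps all synchronizing pairs
and makes `{r, s}` a new one.
-/

section

variable {Q σ σ' : Type*} {δ : Q → σ → Q} {δ' : Q → σ' → Q} {τ : Q → Q} {p q : Q}

theorem dfaRun_append (δ : Q → σ → Q) (q : Q) (u v : List σ) :
    dfaRun δ q (u ++ v) = dfaRun δ (dfaRun δ q u) v :=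
  List.foldl_append

theorem dfaRun_addSymbol_map_some (δ : Q → σ → Q) (τ : Q → Q) (q : Q) (w : List σ) :
    dfaRun (addSymbol δ τ) q (w.map some) = dfaRun δ q w :=
  List.foldl_map

theorem exists_letter_of_dfaRun {R : Q → Q → Prop} (hpq : ¬ R p q) {w : List σ}
    (hw : R (dfaRun δ p w) (dfaRun δ q w)) :
    ∃ (a : σ) (r s : Q), ¬ R r s ∧ R (δ r a) (δ s a) := by
  induction w generalizing p q with
  | nil => exact absurd hw hpq
  | cons a w ih =>
    by_cases h : R (δ p a) (δ q a)
    · exact ⟨a, p, q, hpq, h⟩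
    · exact ih h hw

/-- Two states are mergeable if some word takes them to the same state. Unlike `SyncPair`, this
allows equal states, which makes the relation reflexive. -/
def Mergeable (δ : Q → σ → Q) (p q : Q) : Prop :=
  ∃ w : List σ, dfaRun δ p w = dfaRun δ q w

namespace Mergeable

theorem of_eq (h : p = q) : Mergeable δ p q :=
  ⟨[], h⟩

protected theorem addSymbol (h : Mergeable δ p q) (τ : Q → Q) : Mergeable (addSymbol δ τ) p q := by
  obtain ⟨w, hw⟩ := h
  exact ⟨w.map some, by simpa only [dfaRun_addSymbol_map_some] using hw⟩

theorem addSymbol_of_image (h : Mergeable δ (τ p) (τ q)) : Mergeable (addSymbol δ τ) p q := by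
  obtain ⟨w, hw⟩ := h.addSymbol τ
  exact ⟨none :: w, hw⟩

end Mergeable

theorem exists_word_forall_mem_dfaRun_eq [Nonempty Q] (h : ∀ p q, Mergeable δ p q)
    {S : Set Q} (hS : S.Finite) : ∃ (w : List σ) (qs : Q), ∀ q ∈ S, dfaRun δ q w = qs := by
  induction S, hS using Set.Finite.induction_on with
  | empty => exact ⟨[], Classical.arbitrary Q, by simp⟩
  | @insert x S _ _ ih =>
    obtain ⟨w, qs, hw⟩ := ih
    obtain ⟨v, hv⟩ := h (dfaRun δ x w) qs
    refine ⟨w ++ v, dfaRun δ qs v, Set.forall_mem_insert.2 ⟨?_, fun q hq => ?_⟩⟩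
    · rw [dfaRun_append, hv]
    · rw [dfaRun_append, hw q hq]

theorem exists_isSyncWord_iff_forall_mergeable [Finite Q] [Nonempty Q] :
    (∃ w : List σ, IsSyncWord δ w) ↔ ∀ p q, Mergeable δ p q := by
  refine ⟨fun ⟨w, _, hw⟩ p q => ⟨w, (hw p).trans (hw q).symm⟩, fun h => ?_⟩
  obtain ⟨w, qs, hw⟩ := exists_word_forall_mem_dfaRun_eq h Set.finite_univ
  exact ⟨w, qs, fun q => hw q (Set.mem_univ q)⟩

theorem setOf_syncPair_ssubset_addSymbol (hpq : ¬ Mergeable δ p q)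
    (hτ : Mergeable δ (τ p) (τ q)) :
    {x : Q × Q | SyncPair δ x.1 x.2} ⊂ {x : Q × Q | SyncPair (addSymbol δ τ) x.1 x.2} := by
  have hsub : {x : Q × Q | SyncPair δ x.1 x.2} ⊆ {x : Q × Q | SyncPair (addSymbol δ τ) x.1 x.2} :=
    fun _ ⟨hne, hmerge⟩ => ⟨hne, Mergeable.addSymbol hmerge τ⟩
  have hnew : SyncPair (addSymbol δ τ) p q :=
    ⟨fun heq => hpq (.of_eq heq), hτ.addSymbol_of_image⟩
  exact (Set.ssubset_iff_of_subset hsub).2 ⟨(p, q), hnew, fun hsync => hpq hsync.2⟩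

theorem exists_setOf_syncPair_ssubset_addSymbol (hpq : ¬ Mergeable δ p q)
    (hpq' : Mergeable δ' p q) :
    ∃ a : σ', {x : Q × Q | SyncPair δ x.1 x.2} ⊂
      {x : Q × Q | SyncPair (addSymbol δ (fun q => δ' q a)) x.1 x.2} := by
  obtain ⟨w, hw⟩ := hpq'
  obtain ⟨a, r, s, hrs, ha⟩ := exists_letter_of_dfaRun hpq (.of_eq hw)
  exact ⟨a, setOf_syncPair_ssubset_addSymbol hrs ha⟩

end

theorem extension_adds_sync_pair_general {Q : Type*} [Finite Q] {σ σ' : Type*}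
    (δ : Q → σ → Q) (δ' : Q → σ' → Q)
    (hA : ¬ ∃ w : List σ, IsSyncWord δ w)
    (hB : ∃ w' : List σ', IsSyncWord δ' w') :
    ∃ a : σ',
      {p : Q × Q | SyncPair δ p.1 p.2}.ncard <
        {p : Q × Q | SyncPair (addSymbol δ (fun q => δ' q a)) p.1 p.2}.ncard := by
  have : Nonempty Q := let ⟨_, qs, _⟩ := hB; ⟨qs⟩
  rw [exists_isSyncWord_iff_forall_mergeable] at hA hB
  push Not at hA
  obtain ⟨p, q, hpq⟩ := hA
  obtain ⟨a, ha⟩ := exists_setOf_syncPair_ssubset_addSymbol hpq (hB p q)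
  exact ⟨a, Set.ncard_lt_ncard ha (Set.toFinite _)⟩

/-- If `A = (Q,Σ,δ)` is not synchronizing and its extension `B = (Q,Σ',δ')` is
synchronizing, then `B` has a symbol `a` such that adding `a` (with its transitions
from `B`) to `A` yields strictly more synchronizing pairs of states than `A` has. -/
theorem extension_adds_sync_pair {Q : Type*} [Fintype Q] {σ σ' : Type*}
    (δ : Q → σ → Q) (δ' : Q → σ' → Q)
    (ι : σ → σ') (hinj : Function.Injective ι)
    (hext : ∀ q a, δ' q (ι a) = δ q a)
    (hA : ¬ ∃ w : List σ, IsSyncWord δ w)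
    (hB : ∃ w' : List σ', IsSyncWord δ' w') :
    ∃ a : σ',
      {p : Q × Q | SyncPair δ p.1 p.2}.ncard <
        {p : Q × Q | SyncPair (addSymbol δ (fun q => δ' q a)) p.1 p.2}.ncard :=
  extension_adds_sync_pair_general δ δ' hA hB
end

section
/- For every n ≥ 3, the PFA T_n is carefully synchronizing; its shortest carefully synchronizing word is unique, equals (b a^{n−2})^{n−2} c v, and has length 3(n−1)(n−2)/2 + 1, where v = (a^{n−2} b)^{(n−2)/2} if n is even, and v = a^{(n−3)/2} b (a^{n−2} b)^{(n−3)/2} if n is odd. -/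
/-- One step of a PFA on an `Option` state. -/
def pfaStep {Q σ : Type*} (δ : Q → σ → Option Q) (o : Option Q) (a : σ) : Option Q :=
  o.bind fun q => δ q a

/-- The (partial) state reached from `q` after reading word `w` in the PFA `δ`. -/
def pfaRun {Q σ : Type*} (δ : Q → σ → Option Q) (q : Q) (w : List σ) : Option Q :=
  w.foldl (pfaStep δ) (some q)

/-- A word `w` is carefully synchronizing for the PFA `δ`. -/
def IsCareSyncWord {Q σ : Type*} (δ : Q → σ → Option Q) (w : List σ) : Prop :=
  ∃ qs : Q, ∀ q : Q, pfaRun δ q w = some qs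

/-- The PFA `T_n`: states `Fin n` (state `i` represents the paper's state `i+1`),
alphabet `Fin 3` with `0 = a`, `1 = b`, `2 = c`. -/
def Tdelta (n : ℕ) (hn : 3 ≤ n) : Fin n → Fin 3 → Option (Fin n) := fun q x =>
  if x = 0 then
    -- a : q ↦ q+1 for paper states 1 ≤ q ≤ n−2, (n−1) ↦ 1, n ↦ n
    if hq : q.val + 3 ≤ n then some ⟨q.val + 1, by omega⟩
    else if q.val = n - 2 then some ⟨0, by omega⟩
    else some q
  else if x = 1 then
    -- b : 1 ↦ 2, identity elsewhere
    if q.val = 0 then some ⟨1, by omega⟩ else some q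
  else
    -- c : 1 ↦ 2, undefined on paper states 2..n−1, n ↦ 2 + ⌊(n−1)/2⌋ (mod n−1 if n = 3)
    if q.val = 0 then some ⟨1, by omega⟩
    else if q.val = n - 1 then
      (if hn3 : n = 3 then some ⟨0, by omega⟩ else some ⟨1 + (n - 1) / 2, by omega⟩)
    else none

/-- `repw l k` is the word `l` repeated `k` times. -/
def repw {α : Type*} (l : List α) : ℕ → List α
  | 0 => []
  | k + 1 => l ++ repw l k

/-- The word `(b a^{n−2})^{n−2} c v` where `v = (a^{n−2} b)^{(n−2)/2}` if `n` is even and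
`v = a^{(n−3)/2} b (a^{n−2} b)^{(n−3)/2}` if `n` is odd (`0 = a`, `1 = b`, `2 = c`). -/
def Tword (n : ℕ) : List (Fin 3) :=
  repw ((1 : Fin 3) :: List.replicate (n - 2) (0 : Fin 3)) (n - 2) ++ [(2 : Fin 3)] ++
    (if n % 2 = 0 then
      repw (List.replicate (n - 2) (0 : Fin 3) ++ [(1 : Fin 3)]) ((n - 2) / 2)
    else
      List.replicate ((n - 3) / 2) (0 : Fin 3) ++ [(1 : Fin 3)] ++
        repw (List.replicate (n - 2) (0 : Fin 3) ++ [(1 : Fin 3)]) ((n - 3) / 2))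

/-! Let `m = n - 1`. Unroll the cycle of `T_n` to `ℕ`: `a` moves every point forward by one, `b`
moves forward only the multiples of `m`, and both commute with translation by `m`. While a word
over `{a, b}` moves `p` to `y`, it can shrink the gap between `p` and a point ahead of it only when
a `b` is read while `p` sits at a multiple of `m`, so merging `p` with `p + k` forces `k` multiples
of `m` in `[p, y)`. Since `p` moves by at most one per letter, this bounds the length of the word,
and in the extremal case every letter is forced: `b` at the multiples of `m` and `a` elsewhere.

The letter `c` is defined on the cycle only at the state `0`. A carefully synchronizing word is
thus `u c v`, where `u` collapses the cycle to `0`, hence merges some `p` with `p + m - 1`, and a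
prefix of `v` over `{a, b}` merges the nearly antipodal states `1` and `1 + ⌊m / 2⌋`, along one of
the two arcs between them. -/

section Lift

/-- The action of the letter `l` on the cycle `{0, …, m - 1}`, lifted to `ℕ`: `a` (`l = 0`) is
the successor and `b` (`l = 1`) moves only the lifts of the state `0`. The letter `c` has no
lift; the value at `l = 2` is junk. -/
def liftStep (m x : ℕ) (l : Fin 3) : ℕ := if l = 0 ∨ m ∣ x then x + 1 else x

/-- The lift to `ℕ` of the action of a word over `{a, b}` on the cycle `{0, …, m - 1}`. -/
def liftRun (m x : ℕ) (w : List (Fin 3)) : ℕ := w.foldl (liftStep m) x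

/-- The word of length `k` over `{a, b}` that moves the lift `x` forward with every letter and
uses `b` whenever it can. -/
def pushWord (m x k : ℕ) : List (Fin 3) := (List.range' x k).map fun y => if m ∣ y then 1 else 0

variable {m : ℕ}

theorem ceilDiv_succ (hm : 0 < m) (x : ℕ) :
    (x + 1) ⌈/⌉ m = x ⌈/⌉ m + if m ∣ x then 1 else 0 := by
  obtain ⟨d, rfl⟩ : ∃ d, m = d + 1 := ⟨m - 1, by omega⟩
  rw [Nat.ceilDiv_eq_add_pred_div, Nat.ceilDiv_eq_add_pred_div,
    show x + 1 + (d + 1) - 1 = x + d + 1 by omega, show x + (d + 1) - 1 = x + d by omega,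
    Nat.succ_div]
  simp only [add_assoc, Nat.dvd_add_self_right]

theorem succ_ceilDiv (hm : 0 < m) (x : ℕ) : (x + 1) ⌈/⌉ m = x / m + 1 := by
  rw [Nat.ceilDiv_eq_add_pred_div, show x + 1 + m - 1 = x + m by omega, Nat.add_div_right x hm]

theorem liftStep_zero (m x : ℕ) : liftStep m x 0 = x + 1 := if_pos (Or.inl rfl)

theorem liftStep_one (m x : ℕ) : liftStep m x 1 = if m ∣ x then x + 1 else x := by
  simp only [liftStep, one_ne_zero, false_or]

theorem liftRun_cons (m x : ℕ) (l : Fin 3) (w : List (Fin 3)) :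
    liftRun m x (l :: w) = liftRun m (liftStep m x l) w := rfl

theorem liftStep_le_succ (m x : ℕ) (l : Fin 3) : liftStep m x l ≤ x + 1 := by
  unfold liftStep
  split_ifs <;> omega

theorem le_liftStep (m x : ℕ) (l : Fin 3) : x ≤ liftStep m x l := by
  unfold liftStep
  split_ifs <;> omega

theorem liftStep_mono (m : ℕ) (l : Fin 3) : Monotone (liftStep m · l) := by
  intro x y hxy
  obtain rfl | hlt := hxy.eq_or_lt
  · rfl
  · exact ((liftStep_le_succ m x l).trans hlt).trans (le_liftStep m y l)

theorem liftStep_add_of_dvd {d : ℕ} (hd : m ∣ d) (x : ℕ) (l : Fin 3) :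
    liftStep m (x + d) l = liftStep m x l + d := by
  simp only [liftStep, Nat.dvd_add_left hd]
  split_ifs <;> omega

theorem liftRun_le_add_length (m x : ℕ) (w : List (Fin 3)) : liftRun m x w ≤ x + w.length := by
  induction w generalizing x with
  | nil => rfl
  | cons l w ih =>
    calc liftRun m (liftStep m x l) w ≤ liftStep m x l + w.length := ih _
      _ ≤ x + 1 + w.length := by gcongr; exact liftStep_le_succ m x l
      _ = x + (l :: w).length := by rw [List.length_cons]; omega

theorem liftRun_mono (m : ℕ) (w : List (Fin 3)) : Monotone (liftRun m · w) := by
  induction w with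
  | nil => exact monotone_id
  | cons l w ih => exact ih.comp (liftStep_mono m l)

theorem liftRun_add_of_dvd {d : ℕ} (hd : m ∣ d) (x : ℕ) (w : List (Fin 3)) :
    liftRun m (x + d) w = liftRun m x w + d :=
  List.foldl_hom (· + d) (g₁ := liftStep m) (g₂ := liftStep m) (liftStep_add_of_dvd hd)

theorem gap_liftStep_le (hm : 0 < m) (p q : ℕ) (l : Fin 3) :
    q + p ⌈/⌉ m + liftStep m p l ≤ liftStep m q l + liftStep m p l ⌈/⌉ m + p := by
  have hp := ceilDiv_succ hm p
  unfold liftStep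
  split_ifs at hp ⊢ <;> omega

/- As `p ⌈/⌉ m` counts the multiples of `m` below `p`, this says that the gap `q - p` shrinks by at
most the number of multiples of `m` that `p` passes; the terms are arranged to avoid
subtraction. -/
theorem gap_liftRun_le (hm : 0 < m) (p q : ℕ) (w : List (Fin 3)) :
    q + p ⌈/⌉ m + liftRun m p w ≤ liftRun m q w + liftRun m p w ⌈/⌉ m + p := by
  induction w generalizing p q with
  | nil =>
    change q + p ⌈/⌉ m + p ≤ q + p ⌈/⌉ m + p
    rfl
  | cons l w ih =>
    have hstep := gap_liftStep_le hm p q l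
    have hrest := ih (liftStep m p l) (liftStep m q l)
    rw [liftRun_cons, liftRun_cons]
    omega

theorem pushWord_succ (m x k : ℕ) :
    pushWord m x (k + 1) = (if m ∣ x then 1 else 0) :: pushWord m (x + 1) k := by
  rw [pushWord, List.range'_succ, List.map_cons, pushWord]

theorem pushWord_add (m x k l : ℕ) :
    pushWord m x (k + l) = pushWord m x k ++ pushWord m (x + k) l := by
  simp only [pushWord, ← List.map_append, ← List.range'_append, one_mul]

theorem pushWord_add_of_dvd {d : ℕ} (hd : m ∣ d) (x k : ℕ) :
    pushWord m (x + d) k = pushWord m x k := by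
  induction k generalizing x with
  | zero => rfl
  | succ k ih => simp only [pushWord_succ, add_right_comm x d 1, ih, Nat.dvd_add_left hd]

theorem length_pushWord (m x k : ℕ) : (pushWord m x k).length = k := by
  rw [pushWord, List.length_map, List.length_range']

theorem two_notMem_pushWord (m x k : ℕ) : (2 : Fin 3) ∉ pushWord m x k := by
  simp only [pushWord, List.mem_map, not_exists, not_and]
  intro y _
  split_ifs <;> decide

theorem liftRun_pushWord_of_gap_le (hm : 0 < m) {p k L : ℕ} (hk : k < m)
    (hgap : p ⌈/⌉ m + k ≤ (p + L) ⌈/⌉ m) : liftRun m (p + k) (pushWord m p L) = p + L := by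
  induction L generalizing p k with
  | zero =>
    obtain rfl : k = 0 := by rw [add_zero] at hgap; omega
    rfl
  | succ L ih =>
    have hcount := ceilDiv_succ hm p
    rw [show p + (L + 1) = p + 1 + L by omega] at hgap ⊢
    rw [pushWord_succ, liftRun_cons]
    split_ifs at hcount ⊢ with hdvd
    · obtain rfl | hk0 := k.eq_zero_or_pos
      · rw [add_zero, liftStep_one, if_pos hdvd]
        exact ih hk ((gc_smul_ceilDiv hm).monotone_l (Nat.le_add_right _ _))
      · have hndvd : ¬m ∣ p + k :=
          (Nat.dvd_add_right hdvd).not.2 (Nat.not_dvd_of_pos_of_lt hk0 hk)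
        rw [liftStep_one, if_neg hndvd, show p + k = p + 1 + (k - 1) by omega]
        exact ih (by omega) (by omega)
    · rw [liftStep_zero, add_right_comm]
      exact ih hk (by omega)

/- Equality throughout `gap_liftRun_le`, for a point `p` that moves with every letter, forces each
letter. -/
theorem eq_pushWord_of_gap_le (hm : 0 < m) {p q : ℕ} {w : List (Fin 3)} (hw : (2 : Fin 3) ∉ w)
    (hp : liftRun m p w = p + w.length) (hq : liftRun m q w = p + w.length)
    (hgap : (p + w.length) ⌈/⌉ m + p ≤ q + p ⌈/⌉ m) : w = pushWord m p w.length := by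
  induction w generalizing p q with
  | nil => rfl
  | cons l w ih =>
    obtain ⟨hl, hw⟩ : 2 ≠ l ∧ 2 ∉ w := by simpa only [List.mem_cons, not_or] using hw
    rw [liftRun_cons] at hp hq
    rw [List.length_cons, show p + (w.length + 1) = p + 1 + w.length by omega] at hp hq hgap
    have hmove : liftStep m p l = p + 1 := by
      have := liftRun_le_add_length m (liftStep m p l) w
      have := liftStep_le_succ m p l
      omega
    have hstep := gap_liftStep_le hm p q l
    have hrest := gap_liftRun_le hm (liftStep m p l) (liftStep m q l) w
    rw [hmove] at hp hstep hrest
    have hletter : l = if m ∣ p then 1 else 0 := by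
      have hcount := ceilDiv_succ hm p
      split_ifs at hcount ⊢ with hdvd
      · suffices l ≠ 0 by omega
        rintro rfl
        rw [liftStep_zero] at hstep hq hrest
        rw [hp, hq] at hrest
        omega
      · by_contra hl0
        simp only [liftStep, hl0, hdvd, or_self, if_false] at hmove
        omega
    rw [List.length_cons, pushWord_succ, ← hletter, ← ih hw hp hq (by omega)]

theorem mul_lt_liftRun_of_merge {j k : ℕ} {w : List (Fin 3)} (hj : j < m)
    (h : liftRun m (j + 1) w = liftRun m (j + 1 + k) w) : m * k < liftRun m (j + 1) w := by
  have hm : 0 < m := by omega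
  have hgap := gap_liftRun_le hm (j + 1) (j + 1 + k) w
  rw [← h, succ_ceilDiv hm, Nat.div_eq_of_lt hj] at hgap
  rw [← not_le, ← ceilDiv_le_iff_le_mul hm]
  omega

theorem eq_pushWord_of_merge {j k : ℕ} {w : List (Fin 3)} (hj : j < m) (hw : (2 : Fin 3) ∉ w)
    (h : liftRun m (j + 1) w = liftRun m (j + 1 + k) w)
    (hmove : liftRun m (j + 1) w = j + 1 + w.length) (hlen : j + 1 + w.length ≤ m * (k + 1)) :
    w = pushWord m (j + 1) w.length := by
  have hm : 0 < m := by omega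
  have hcount := (ceilDiv_le_iff_le_mul hm).2 hlen
  refine eq_pushWord_of_gap_le hm hw hmove (h ▸ hmove) ?_
  rw [succ_ceilDiv hm, Nat.div_eq_of_lt hj]
  omega

end Lift

section Collapse

variable {m : ℕ} {u : List (Fin 3)}

theorem exists_merge_of_forall_dvd (hm : 0 < m) (hu : ∀ x, m ∣ liftRun m x u) :
    ∃ j < m, liftRun m (j + 1) u = liftRun m (j + 1 + (m - 1)) u := by
  have hex : ∃ p, liftRun m p u = liftRun m m u := ⟨m, rfl⟩
  have hperiod (x : ℕ) := liftRun_add_of_dvd (dvd_refl m) x u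
  obtain ⟨j, hj⟩ : ∃ j, Nat.find hex = j + 1 := Nat.exists_eq_succ_of_ne_zero fun h0 => by
    have h := Nat.find_spec hex
    have := hperiod 0
    rw [h0] at h
    rw [zero_add] at this
    omega
  have hjm : j + 1 ≤ m := hj ▸ Nat.find_min' hex rfl
  have hspec : liftRun m (j + 1) u = liftRun m m u := hj ▸ Nat.find_spec hex
  have hne : liftRun m j u ≠ liftRun m m u := Nat.find_min hex (by omega)
  have hlt : liftRun m j u < liftRun m m u :=
    lt_of_le_of_ne (liftRun_mono m u (show j ≤ m by omega)) hne
  have hjump : liftRun m j u + m ≤ liftRun m m u :=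
    Nat.ModEq.add_le_of_lt
      ((Nat.modEq_zero_iff_dvd.2 (hu j)).trans (Nat.modEq_zero_iff_dvd.2 (hu m)).symm) hlt
  refine ⟨j, hjm, ?_⟩
  rw [show j + 1 + (m - 1) = j + m by omega, hspec]
  exact le_antisymm (liftRun_mono m u (Nat.le_add_left m j)) (hperiod j ▸ hjump)

theorem collapse_length (hm : 0 < m) (hw : (2 : Fin 3) ∉ u) (hu : ∀ x, m ∣ liftRun m x u) :
    m * (m - 1) ≤ u.length ∧
      (u.length ≤ m * (m - 1) → u = pushWord m 0 (m * (m - 1))) := by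
  obtain ⟨j, hj, hmerge⟩ := exists_merge_of_forall_dvd hm hu
  have hlt := mul_lt_liftRun_of_merge hj hmerge
  have hmul : m * (m - 1 + 1) = m * (m - 1) + m := Nat.mul_succ m (m - 1)
  have hle : m * (m - 1) + m ≤ liftRun m (j + 1) u :=
    Nat.ModEq.add_le_of_lt ((Nat.modEq_zero_iff_dvd.2 (dvd_mul_right m _)).trans
      (Nat.modEq_zero_iff_dvd.2 (hu _)).symm) hlt
  have hspeed := liftRun_le_add_length m (j + 1) u
  refine ⟨by omega, fun hshort => ?_⟩
  obtain rfl : j = m - 1 := by omega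
  have hpush := eq_pushWord_of_merge hj hw hmerge (by omega) (by omega)
  rwa [show m - 1 + 1 = 0 + m by omega, pushWord_add_of_dvd dvd_rfl,
    show u.length = m * (m - 1) by omega] at hpush

theorem dvd_liftRun_pushWord (hm : 0 < m) (x : ℕ) :
    m ∣ liftRun m x (pushWord m 0 (m * (m - 1))) := by
  have hgap : 0 ⌈/⌉ m + x % m ≤ (0 + m * (m - 1)) ⌈/⌉ m := by
    rw [zero_ceilDiv, zero_add, zero_add, ← smul_eq_mul, smul_ceilDiv hm]
    exact Nat.le_sub_one_of_lt (Nat.mod_lt x hm)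
  have hcollapse := liftRun_pushWord_of_gap_le hm (Nat.mod_lt x hm) hgap
  rw [zero_add, zero_add] at hcollapse
  rw [← Nat.mod_add_div x m, liftRun_add_of_dvd (dvd_mul_right m _), hcollapse]
  exact dvd_add (dvd_mul_right m _) (dvd_mul_right m _)

end Collapse

section Merge

/-- The starting point of the arc of length `m / 2` that is cheaper to collapse, among the two
arcs joining the states `1` and `m / 2 + 1` of the cycle. -/
def shortArcStart (m : ℕ) : ℕ := (if Even m then m / 2 else 0) + 1

theorem shortArcStart_of_even {m : ℕ} (hm : Even m) : shortArcStart m = m / 2 + 1 := by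
  rw [shortArcStart, if_pos hm]

theorem shortArcStart_of_odd {m : ℕ} (hm : Odd m) : shortArcStart m = 1 := by
  rw [shortArcStart, if_neg (Nat.not_even_iff_odd.2 hm)]

theorem exists_shortArcStart_eq_succ {m : ℕ} (hm : 0 < m) : ∃ j < m, shortArcStart m = j + 1 :=
  ⟨_, by split_ifs <;> omega, rfl⟩

theorem half_mul_pred_add_of_even {m : ℕ} (hm : Even m) :
    m * (m - 1) / 2 + m / 2 = m * (m / 2) := by
  obtain ⟨s, rfl⟩ := hm.two_dvd
  rw [mul_assoc, Nat.mul_div_cancel_left _ two_pos, Nat.mul_div_cancel_left _ two_pos]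
  cases s with
  | zero => rfl
  | succ s =>
    rw [show 2 * (s + 1) - 1 = 2 * s + 1 by omega]
    ring

theorem half_mul_pred_of_odd {m : ℕ} (hm : Odd m) : m * (m - 1) / 2 = m * (m / 2) := by
  obtain ⟨s, rfl⟩ := hm
  rw [Nat.add_sub_cancel, mul_left_comm, Nat.mul_div_cancel_left _ two_pos,
    show (2 * s + 1) / 2 = s by omega]

theorem shortArcStart_add (m : ℕ) : shortArcStart m + m * (m - 1) / 2 = m * (m / 2) + 1 := by
  obtain hm | hm := m.even_or_odd
  · rw [shortArcStart_of_even hm, ← half_mul_pred_add_of_even hm]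
    omega
  · rw [shortArcStart_of_odd hm, half_mul_pred_of_odd hm, add_comm]

variable {m : ℕ} {v : List (Fin 3)}

theorem arc_merge_of_modEq {x k : ℕ} (hk : k ≤ m)
    (h : liftRun m x v ≡ liftRun m (x + k) v [MOD m]) :
    liftRun m x v = liftRun m (x + k) v ∨ liftRun m (x + k) v = liftRun m (x + m) v := by
  have hle : liftRun m x v ≤ liftRun m (x + k) v := liftRun_mono m v (Nat.le_add_right x k)
  have hle' : liftRun m (x + k) v ≤ liftRun m (x + m) v := liftRun_mono m v (by omega)
  refine hle.eq_or_lt.imp_right fun hlt => le_antisymm hle' ?_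
  rw [liftRun_add_of_dvd dvd_rfl]
  exact h.add_le_of_lt hlt

theorem merge_shortArc_or_lt_length (hm : 0 < m)
    (h : liftRun m 1 v ≡ liftRun m (m / 2 + 1) v [MOD m]) :
    liftRun m (shortArcStart m) v = liftRun m (shortArcStart m + m / 2) v ∨
      m * (m - 1) / 2 < v.length := by
  rw [add_comm] at h
  have hspeed := liftRun_le_add_length m
  obtain hnear | hfar := arc_merge_of_modEq (Nat.div_le_self m 2) h
  · obtain heven | hodd := m.even_or_odd
    · right
      have hlt := mul_lt_liftRun_of_merge hm hnear
      have := half_mul_pred_add_of_even heven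
      have := hspeed (0 + 1) v
      have : 2 ≤ m := Nat.le_of_dvd hm heven.two_dvd
      omega
    · left
      rw [shortArcStart_of_odd hodd, hnear]
  · rw [add_comm 1 (m / 2)] at hfar
    obtain heven | hodd := m.even_or_odd
    · left
      have := Nat.div_two_mul_two_of_even heven
      rw [shortArcStart_of_even heven, hfar, show m / 2 + 1 + m / 2 = 1 + m by omega]
    · right
      have := Nat.two_mul_div_two_add_one_of_odd hodd
      rw [show 1 + m = m / 2 + 1 + (m / 2 + 1) by omega] at hfar
      have hlt := mul_lt_liftRun_of_merge (by omega) hfar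
      have := half_mul_pred_of_odd hodd
      have := hspeed (m / 2 + 1) v
      rw [Nat.mul_succ] at hlt
      omega

theorem merge_length (hm : 0 < m) (hv : (2 : Fin 3) ∉ v)
    (h : liftRun m 1 v ≡ liftRun m (m / 2 + 1) v [MOD m]) :
    m * (m - 1) / 2 ≤ v.length ∧
      (v.length ≤ m * (m - 1) / 2 → v = pushWord m (shortArcStart m) (m * (m - 1) / 2)) := by
  obtain hmerge | hlt := merge_shortArc_or_lt_length hm h
  · have hadd := shortArcStart_add m
    obtain ⟨j, hj, hstart⟩ := exists_shortArcStart_eq_succ hm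
    rw [hstart] at hmerge hadd ⊢
    have hlt := mul_lt_liftRun_of_merge hj hmerge
    have hspeed := liftRun_le_add_length m (j + 1) v
    refine ⟨by omega, fun hshort => ?_⟩
    have hlen : v.length = m * (m - 1) / 2 := by omega
    rw [← hlen]
    exact eq_pushWord_of_merge hj hv hmerge (by omega) (by rw [Nat.mul_succ]; omega)
  · exact ⟨hlt.le, fun hshort => absurd hshort hlt.not_ge⟩

theorem liftRun_pushWord_shortArcStart (hm : 0 < m) {k : ℕ} (hk : k ≤ m / 2) :
    liftRun m (shortArcStart m + k) (pushWord m (shortArcStart m) (m * (m - 1) / 2)) =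
      m * (m / 2) + 1 := by
  rw [← shortArcStart_add]
  refine liftRun_pushWord_of_gap_le hm (by omega) ?_
  obtain ⟨j, hj, hstart⟩ := exists_shortArcStart_eq_succ hm
  rw [shortArcStart_add, hstart, succ_ceilDiv hm, succ_ceilDiv hm, Nat.div_eq_of_lt hj,
    Nat.mul_div_cancel_left _ hm]
  omega

theorem pushWord_shortArcStart_merges (hm : 0 < m) :
    liftRun m 1 (pushWord m (shortArcStart m) (m * (m - 1) / 2)) ≡
      liftRun m (m / 2 + 1) (pushWord m (shortArcStart m) (m * (m - 1) / 2)) [MOD m] := by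
  have hstart := liftRun_pushWord_shortArcStart hm (Nat.zero_le _)
  have hend := liftRun_pushWord_shortArcStart hm le_rfl
  set v := pushWord m (shortArcStart m) (m * (m - 1) / 2)
  rw [add_zero] at hstart
  obtain heven | hodd := m.even_or_odd
  · rw [shortArcStart_of_even heven] at hstart hend
    have := Nat.div_two_mul_two_of_even heven
    rw [show m / 2 + 1 + m / 2 = 1 + m by omega, liftRun_add_of_dvd dvd_rfl] at hend
    rw [hstart, ← hend]
    exact Nat.ModEq.symm Nat.add_modEq_right
  · rw [shortArcStart_of_odd hodd] at hstart hend
    rw [add_comm] at hend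
    rw [hstart, hend]

end Merge

section Word

variable {m : ℕ}

theorem repw_pushWord (m x k : ℕ) : repw (pushWord m x m) k = pushWord m x (m * k) := by
  induction k with
  | zero => rfl
  | succ k ih => rw [repw, ih, Nat.mul_succ, add_comm (m * k), pushWord_add,
      pushWord_add_of_dvd dvd_rfl]

theorem pushWord_eq_replicate {x k : ℕ} (h : ∀ y, x ≤ y → y < x + k → ¬m ∣ y) :
    pushWord m x k = List.replicate k 0 := by
  rw [List.eq_replicate_iff]
  refine ⟨length_pushWord m x k, fun l hl => ?_⟩
  simp only [pushWord, List.mem_map, List.mem_range'_1] at hl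
  obtain ⟨y, ⟨hxy, hyk⟩, rfl⟩ := hl
  exact if_neg (h y hxy hyk)

theorem pushWord_zero_period (hm : 0 < m) : pushWord m 0 m = 1 :: List.replicate (m - 1) 0 := by
  obtain ⟨d, rfl⟩ : ∃ d, m = d + 1 := ⟨m - 1, by omega⟩
  rw [pushWord_succ, if_pos (dvd_zero _),
    pushWord_eq_replicate fun y _ _ => Nat.not_dvd_of_pos_of_lt (by omega) (by omega),
    Nat.add_sub_cancel]

theorem pushWord_sub_succ {j : ℕ} (hj : j < m) :
    pushWord m (m - j) (j + 1) = List.replicate j 0 ++ [1] := by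
  rw [pushWord_add, pushWord_eq_replicate fun y _ _ =>
    Nat.not_dvd_of_pos_of_lt (by omega) (by omega), show m - j + j = m by omega]
  simp [pushWord]

theorem pushWord_one_period (hm : 0 < m) :
    pushWord m 1 m = List.replicate (m - 1) 0 ++ [1] := by
  have h := pushWord_sub_succ (show m - 1 < m by omega)
  rwa [show m - (m - 1) = 1 by omega, Nat.sub_add_cancel hm] at h

theorem pushWord_shortArcStart_of_odd (hm : Odd m) :
    pushWord m (shortArcStart m) (m * (m - 1) / 2) =
      repw (List.replicate (m - 1) 0 ++ [1]) ((m - 1) / 2) := by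
  rw [shortArcStart_of_odd hm, ← pushWord_one_period hm.pos, repw_pushWord,
    Nat.mul_div_assoc m (Nat.Odd.sub_odd hm odd_one).two_dvd]

theorem pushWord_shortArcStart_of_even (hm : Even m) (hpos : 0 < m) :
    pushWord m (shortArcStart m) (m * (m - 1) / 2) =
      List.replicate ((m - 2) / 2) 0 ++ [1] ++
        repw (List.replicate (m - 1) 0 ++ [1]) ((m - 2) / 2) := by
  have htwo := Nat.div_two_mul_two_of_even hm
  have hadd := half_mul_pred_add_of_even hm
  obtain ⟨j, hj⟩ : ∃ j, m / 2 = j + 1 := ⟨m / 2 - 1, by omega⟩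
  have hlen : m * (m - 1) / 2 = j + 1 + m * j := by
    rw [hj, Nat.mul_succ] at hadd
    omega
  rw [shortArcStart_of_even hm, show m / 2 + 1 = m - j by omega, hlen, pushWord_add,
    pushWord_sub_succ (by omega), show m - j + (j + 1) = 1 + m by omega,
    pushWord_add_of_dvd dvd_rfl, ← repw_pushWord, pushWord_one_period hpos,
    show (m - 2) / 2 = j by omega]

theorem Tword_succ (hm : 0 < m) :
    Tword (m + 1) = pushWord m 0 (m * (m - 1)) ++
      2 :: pushWord m (shortArcStart m) (m * (m - 1) / 2) := by
  rw [Tword, ← repw_pushWord, pushWord_zero_period hm, List.append_assoc, List.singleton_append]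
  congr 2
  obtain heven | hodd := m.even_or_odd
  · rw [pushWord_shortArcStart_of_even heven hm, if_neg (by grind)]
    rfl
  · rw [pushWord_shortArcStart_of_odd hodd, if_pos (by grind)]
    rfl

theorem length_Tword_succ (hm : 0 < m) :
    (Tword (m + 1)).length = m * (m - 1) + 1 + m * (m - 1) / 2 := by
  rw [Tword_succ hm, List.length_append, List.length_cons, length_pushWord, length_pushWord]
  omega

end Word

section PartialRun

variable {Q σ : Type*} (δ : Q → σ → Option Q)

theorem foldl_pfaStep (o : Option Q) (w : List σ) :
    w.foldl (pfaStep δ) o = o.bind fun q => pfaRun δ q w := by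
  cases o with
  | none => exact List.foldl_fixed' (fun _ => rfl) w
  | some q => rfl

theorem pfaRun_cons (q : Q) (x : σ) (w : List σ) :
    pfaRun δ q (x :: w) = (δ q x).bind fun r => pfaRun δ r w :=
  foldl_pfaStep δ (δ q x) w

theorem pfaRun_append (q : Q) (u w : List σ) :
    pfaRun δ q (u ++ w) = (pfaRun δ q u).bind fun r => pfaRun δ r w := by
  rw [pfaRun, List.foldl_append, foldl_pfaStep, pfaRun]

end PartialRun

section Automaton

variable {m : ℕ} (hn : 3 ≤ m + 1)

/-- The state of the cycle `{0, …, m - 1}` of `T_{m+1}` that the lift `x` stands for. -/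
def cycleState (x : ℕ) : Fin (m + 1) := ⟨x % m, (Nat.mod_lt x (by omega)).trans m.lt_succ_self⟩

theorem val_cycleState (x : ℕ) : (cycleState hn x : ℕ) = x % m := rfl

theorem cycleState_eq_iff {x y : ℕ} : cycleState hn x = cycleState hn y ↔ x ≡ y [MOD m] :=
  Fin.ext_iff

theorem cycleState_ne_last (x : ℕ) : cycleState hn x ≠ Fin.last m :=
  Fin.ne_of_lt (Nat.mod_lt x (by omega))

theorem exists_eq_cycleState_or_eq_last (q : Fin (m + 1)) :
    (∃ x, q = cycleState hn x) ∨ q = Fin.last m :=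
  q.eq_castSucc_or_eq_last.imp_left fun ⟨i, hi⟩ =>
    ⟨i, hi.trans (Fin.ext (Nat.mod_eq_of_lt i.isLt).symm)⟩

theorem Tdelta_cycleState (x : ℕ) {l : Fin 3} (hl : 2 ≠ l) :
    Tdelta (m + 1) hn (cycleState hn x) l = some (cycleState hn (liftStep m x l)) := by
  have hval := val_cycleState hn x
  have hlt := Nat.mod_lt x (show 0 < m by omega)
  have hsucc : (x + 1) % m = if x % m + 1 = m then 0 else x % m + 1 := by
    rw [Nat.add_mod_eq_ite, Nat.mod_eq_of_lt (show 1 < m by omega)]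
    split_ifs <;> omega
  obtain rfl | rfl : l = 0 ∨ l = 1 := by omega
  · simp only [liftStep_zero, Tdelta, if_true]
    split_ifs at hsucc ⊢ <;> simp only [Option.some_inj, Fin.ext_iff, val_cycleState] <;> omega
  · simp only [liftStep_one, Tdelta, Nat.dvd_iff_mod_eq_zero, if_true, if_neg one_ne_zero]
    split_ifs at hsucc ⊢ <;> simp only [Option.some_inj, Fin.ext_iff, val_cycleState] <;> omega

theorem Tdelta_last {l : Fin 3} (hl : 2 ≠ l) :
    Tdelta (m + 1) hn (Fin.last m) l = some (Fin.last m) := by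
  obtain rfl | rfl : l = 0 ∨ l = 1 := by omega
  all_goals
    simp only [Tdelta, Fin.val_last, if_true, if_neg one_ne_zero]
    split_ifs <;> first | omega | rfl

theorem Tdelta_cycleState_two (x : ℕ) :
    Tdelta (m + 1) hn (cycleState hn x) 2 = if m ∣ x then some (cycleState hn 1) else none := by
  have hval := val_cycleState hn x
  have hlt := Nat.mod_lt x (show 0 < m by omega)
  have hone : 1 % m = 1 := Nat.mod_eq_of_lt (by omega)
  simp only [Tdelta, Nat.dvd_iff_mod_eq_zero, if_neg (show (2 : Fin 3) ≠ 0 by decide),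
    if_neg (show (2 : Fin 3) ≠ 1 by decide)]
  split_ifs <;> first | omega | rfl | exact congrArg some (Fin.ext hone.symm)

theorem Tdelta_last_two :
    Tdelta (m + 1) hn (Fin.last m) 2 = some (cycleState hn (m / 2 + 1)) := by
  have hmod : (m / 2 + 1) % m = if m = 2 then 0 else m / 2 + 1 := by
    split_ifs with h
    · rw [h]
    · exact Nat.mod_eq_of_lt (by omega)
  simp only [Tdelta, Fin.val_last, if_neg (show (2 : Fin 3) ≠ 0 by decide),
    if_neg (show (2 : Fin 3) ≠ 1 by decide)]
  split_ifs at hmod ⊢ <;>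
    first | omega | exact congrArg some (Fin.ext (by simp only [val_cycleState]; omega))

theorem pfaRun_cycleState (x : ℕ) {w : List (Fin 3)} (hw : (2 : Fin 3) ∉ w) :
    pfaRun (Tdelta (m + 1) hn) (cycleState hn x) w = some (cycleState hn (liftRun m x w)) := by
  induction w generalizing x with
  | nil => rfl
  | cons l w ih =>
    obtain ⟨hl, hw⟩ : 2 ≠ l ∧ 2 ∉ w := by simpa only [List.mem_cons, not_or] using hw
    rw [pfaRun_cons, Tdelta_cycleState hn x hl, Option.bind_some, ih _ hw, liftRun_cons]

theorem pfaRun_last {w : List (Fin 3)} (hw : (2 : Fin 3) ∉ w) :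
    pfaRun (Tdelta (m + 1) hn) (Fin.last m) w = some (Fin.last m) := by
  induction w with
  | nil => rfl
  | cons l w ih =>
    obtain ⟨hl, hw⟩ : 2 ≠ l ∧ 2 ∉ w := by simpa only [List.mem_cons, not_or] using hw
    rw [pfaRun_cons, Tdelta_last hn hl, Option.bind_some, ih hw]

theorem two_mem_of_isCareSyncWord {w : List (Fin 3)} (hw : IsCareSyncWord (Tdelta (m + 1) hn) w) :
    (2 : Fin 3) ∈ w := by
  by_contra h
  obtain ⟨s, hs⟩ := hw
  have hcycle := hs (cycleState hn 0)
  have hlast := hs (Fin.last m)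
  rw [pfaRun_cycleState hn 0 h] at hcycle
  rw [pfaRun_last hn h] at hlast
  exact cycleState_ne_last hn _ (Option.some_injective _ (hcycle.trans hlast.symm))

theorem isCareSyncWord_append_two_cons_iff {u v : List (Fin 3)} (hu : (2 : Fin 3) ∉ u) :
    IsCareSyncWord (Tdelta (m + 1) hn) (u ++ 2 :: v) ↔
      (∀ x, m ∣ liftRun m x u) ∧
        ∃ s, pfaRun (Tdelta (m + 1) hn) (cycleState hn 1) v = some s ∧
          pfaRun (Tdelta (m + 1) hn) (cycleState hn (m / 2 + 1)) v = some s := by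
  have hcycle (x : ℕ) : pfaRun (Tdelta (m + 1) hn) (cycleState hn x) (u ++ 2 :: v) =
      if m ∣ liftRun m x u then pfaRun (Tdelta (m + 1) hn) (cycleState hn 1) v else none := by
    rw [pfaRun_append, pfaRun_cycleState hn x hu, Option.bind_some, pfaRun_cons,
      Tdelta_cycleState_two]
    split_ifs <;> rfl
  have hlast : pfaRun (Tdelta (m + 1) hn) (Fin.last m) (u ++ 2 :: v) =
      pfaRun (Tdelta (m + 1) hn) (cycleState hn (m / 2 + 1)) v := by
    rw [pfaRun_append, pfaRun_last hn hu, Option.bind_some, pfaRun_cons, Tdelta_last_two,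
      Option.bind_some]
  constructor
  · rintro ⟨s, hs⟩
    have hdvd (x : ℕ) : m ∣ liftRun m x u := by
      by_contra h
      have := hs (cycleState hn x)
      rw [hcycle, if_neg h] at this
      exact Option.some_ne_none s this.symm
    refine ⟨hdvd, s, ?_, hlast ▸ hs (Fin.last m)⟩
    rw [← hs (cycleState hn 0), hcycle, if_pos (hdvd 0)]
  · rintro ⟨hdvd, s, hone, hhalf⟩
    refine ⟨s, fun q => ?_⟩
    obtain ⟨x, rfl⟩ | rfl := exists_eq_cycleState_or_eq_last hn q
    · rw [hcycle, if_pos (hdvd x), hone]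
    · rw [hlast, hhalf]

theorem exists_prefix_merging {v : List (Fin 3)} {x y : ℕ} {s : Fin (m + 1)}
    (hx : pfaRun (Tdelta (m + 1) hn) (cycleState hn x) v = some s)
    (hy : pfaRun (Tdelta (m + 1) hn) (cycleState hn y) v = some s) :
    ∃ t, t <+: v ∧ (2 : Fin 3) ∉ t ∧ liftRun m x t ≡ liftRun m y t [MOD m] := by
  by_cases hv : (2 : Fin 3) ∈ v
  · obtain ⟨t, r, rfl, ht⟩ := List.eq_append_cons_of_mem hv
    have hzero {z : ℕ}
        (hz : pfaRun (Tdelta (m + 1) hn) (cycleState hn z) (t ++ 2 :: r) = some s) :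
        liftRun m z t ≡ 0 [MOD m] := by
      rw [Nat.modEq_zero_iff_dvd]
      by_contra h
      rw [pfaRun_append, pfaRun_cycleState hn z ht, Option.bind_some, pfaRun_cons,
        Tdelta_cycleState_two, if_neg h] at hz
      exact Option.some_ne_none s hz.symm
    exact ⟨t, List.prefix_append t _, ht, (hzero hx).trans (hzero hy).symm⟩
  · rw [pfaRun_cycleState hn x hv] at hx
    rw [pfaRun_cycleState hn y hv] at hy
    exact ⟨v, List.prefix_rfl, hv,
      (cycleState_eq_iff hn).1 (Option.some_injective _ (hx.trans hy.symm))⟩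

theorem isCareSyncWord_Tword : IsCareSyncWord (Tdelta (m + 1) hn) (Tword (m + 1)) := by
  have hm : 0 < m := by omega
  have hv := two_notMem_pushWord m (shortArcStart m) (m * (m - 1) / 2)
  rw [Tword_succ hm, isCareSyncWord_append_two_cons_iff hn (two_notMem_pushWord _ _ _)]
  refine ⟨dvd_liftRun_pushWord hm, _, pfaRun_cycleState hn 1 hv, ?_⟩
  rw [pfaRun_cycleState hn _ hv, (cycleState_eq_iff hn).2 (pushWord_shortArcStart_merges hm)]

theorem exists_eq_append_two_cons_of_isCareSyncWord {w : List (Fin 3)}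
    (hw : IsCareSyncWord (Tdelta (m + 1) hn) w) :
    ∃ u t v, w = u ++ 2 :: v ∧ (2 : Fin 3) ∉ u ∧ (∀ x, m ∣ liftRun m x u) ∧
      t <+: v ∧ (2 : Fin 3) ∉ t ∧ liftRun m 1 t ≡ liftRun m (m / 2 + 1) t [MOD m] := by
  obtain ⟨u, v, rfl, hu⟩ := List.eq_append_cons_of_mem (two_mem_of_isCareSyncWord hn hw)
  obtain ⟨hdvd, s, hone, hhalf⟩ := (isCareSyncWord_append_two_cons_iff hn hu).1 hw
  obtain ⟨t, htv, ht, hmerge⟩ := exists_prefix_merging hn hone hhalf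
  exact ⟨u, t, v, rfl, hu, hdvd, htv, ht, hmerge⟩

end Automaton

/-- For every `n ≥ 3`, the PFA `T_n` is carefully synchronizing, with unique shortest
carefully synchronizing word `(b a^{n−2})^{n−2} c v` of length `3(n−1)(n−2)/2 + 1`. -/
theorem Tn_shortest_sync (n : ℕ) (hn : 3 ≤ n) :
    IsCareSyncWord (Tdelta n hn) (Tword n) ∧
      (Tword n).length = 3 * (n - 1) * (n - 2) / 2 + 1 ∧
      ∀ w : List (Fin 3), IsCareSyncWord (Tdelta n hn) w →
        (Tword n).length ≤ w.length ∧ (w.length ≤ (Tword n).length → w = Tword n) := by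
  obtain ⟨m, rfl⟩ : ∃ m, n = m + 1 := ⟨n - 1, by omega⟩
  have hm : 0 < m := by omega
  have hlen := length_Tword_succ hm
  refine ⟨isCareSyncWord_Tword hn, ?_, fun w hw => ?_⟩
  · rw [hlen, Nat.add_sub_cancel, show m + 1 - 2 = m - 1 by omega, mul_assoc]
    omega
  · obtain ⟨u, t, v, rfl, hu, hdvd, htv, ht, hmerge⟩ :=
      exists_eq_append_two_cons_of_isCareSyncWord hn hw
    obtain ⟨hu_le, hu_eq⟩ := collapse_length hm hu hdvd
    obtain ⟨ht_le, ht_eq⟩ := merge_length hm ht hmerge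
    have htv_le := htv.length_le
    rw [hlen, List.length_append, List.length_cons]
    refine ⟨by omega, fun hshort => ?_⟩
    obtain rfl : t = v := htv.eq_of_length_le (by omega)
    rw [Tword_succ hm, ← hu_eq (by omega), ← ht_eq (by omega)]
end

section
/- For every k ≥ 3, the string C C A^{k−2} rewrites in one or more steps of the rewrite system R to the string C C A^{k−3} B, i.e. CCA^{k−2} →_R^+ CCA^{k−3}B. -/
/-- The three-letter alphabet {A, B, C}. -/
inductive Letter : Type
  | A
  | B
  | C
  deriving DecidableEq

open Letter

/-- The rules of the rewrite system `R`: `BBA → AAB`, `CBA → CAB`, `CCA → CCB`. -/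
def RuleR : List Letter → List Letter → Prop := fun l r =>
  (l = [B, B, A] ∧ r = [A, A, B]) ∨
  (l = [C, B, A] ∧ r = [C, A, B]) ∨
  (l = [C, C, A] ∧ r = [C, C, B])

/-- `u →_R v`: one rewrite step of the system `R`. -/
def StepR (u v : List Letter) : Prop :=
  ∃ u₁ u₂ l r, RuleR l r ∧ u = u₁ ++ l ++ u₂ ∧ v = u₁ ++ r ++ u₂

section

open Relation List

theorem RuleR.bba : RuleR [B, B, A] [A, A, B] := .inl ⟨rfl, rfl⟩

theorem RuleR.cba : RuleR [C, B, A] [C, A, B] := .inr (.inl ⟨rfl, rfl⟩)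

theorem RuleR.cca : RuleR [C, C, A] [C, C, B] := .inr (.inr ⟨rfl, rfl⟩)

theorem RuleR.stepR {l r : List Letter} (h : RuleR l r) (u₁ u₂ : List Letter) :
    StepR (u₁ ++ l ++ u₂) (u₁ ++ r ++ u₂) :=
  ⟨u₁, u₂, l, r, h, rfl, rfl⟩

theorem StepR.append_right {u v : List Letter} (h : StepR u v) (w : List Letter) :
    StepR (u ++ w) (v ++ w) := by
  obtain ⟨u₁, u₂, l, r, hlr, rfl, rfl⟩ := h
  simpa only [append_assoc] using hlr.stepR u₁ (u₂ ++ w)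

theorem transGen_stepR_append_right {u v : List Letter} (h : TransGen StepR u v)
    (w : List Letter) : TransGen StepR (u ++ w) (v ++ w) :=
  h.lift (· ++ w) fun _ _ hstep => hstep.append_right w

/-- Treating the first `n + 2` letters of `Aⁿ⁺³`, and then the first `n + 1`, by the two preceding
cases leaves the suffix `BBA`, which becomes `AAB`. -/
theorem transGen_stepR_append_replicate_A {p : List Letter}
    (h₀ : TransGen StepR (p ++ [A]) (p ++ [B]))
    (h₁ : TransGen StepR (p ++ [A, A]) (p ++ [A, B])) :
    ∀ n : ℕ, TransGen StepR (p ++ replicate (n + 1) A) (p ++ replicate n A ++ [B])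
  | 0 => by simpa using h₀
  | 1 => by simpa using h₁
  | n + 2 => by
    have ih₀ := transGen_stepR_append_replicate_A h₀ h₁ n
    have ih₁ := transGen_stepR_append_replicate_A h₀ h₁ (n + 1)
    have hBBA : StepR (p ++ replicate n A ++ [B, B, A]) (p ++ replicate n A ++ [A, A, B]) := by
      simpa using RuleR.bba.stepR (p ++ replicate n A) []
    calc
      p ++ replicate (n + 3) A
      _ = p ++ replicate (n + 2) A ++ [A] := by simp [replicate_succ']
      TransGen StepR _ (p ++ replicate (n + 1) A ++ [B] ++ [A]) :=
        transGen_stepR_append_right ih₁ [A]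
      _ = p ++ replicate (n + 1) A ++ [B, A] := by simp
      TransGen StepR _ (p ++ replicate n A ++ [B] ++ [B, A]) :=
        transGen_stepR_append_right ih₀ [B, A]
      _ = p ++ replicate n A ++ [B, B, A] := by simp
      StepR _ (p ++ replicate n A ++ [A, A, B]) := hBBA
      _ = p ++ replicate (n + 2) A ++ [B] := by simp [replicate_succ']

end

/-- For every `k ≥ 3`, `CCA^{k−2} →_R^+ CCA^{k−3}B`. -/
theorem CCA_rewrites_to_CCAB (k : ℕ) (hk : 3 ≤ k) :
    Relation.TransGen StepR
      ([C, C] ++ List.replicate (k - 2) A)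
      ([C, C] ++ List.replicate (k - 3) A ++ [B]) := by
  obtain ⟨n, rfl⟩ := Nat.exists_eq_add_of_le' hk
  have hCCA : StepR [C, C, A] [C, C, B] := RuleR.cca.stepR [] []
  have hCCAA : StepR [C, C, A, A] [C, C, B, A] := RuleR.cca.stepR [] [A]
  have hCCBA : StepR [C, C, B, A] [C, C, A, B] := RuleR.cba.stepR [C] []
  exact transGen_stepR_append_replicate_A (p := [C, C])
    (.single hCCA) (.tail (.single hCCAA) hCCBA) n
end

section
/- For every k ≥ 3, the smallest possible number of →_R rewrite steps needed to rewrite C C A^{k−2} to a string ending in the letter B is exactly fib(k) − 1; in particular such a rewrite sequence exists. -/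
open Letter

/-- `StepRN n u v`: `u` rewrites to `v` in exactly `n` steps of `R`. -/
inductive StepRN : ℕ → List Letter → List Letter → Prop
  | refl (u : List Letter) : StepRN 0 u u
  | tail {n : ℕ} {u v w : List Letter} : StepRN n u v → StepR v w → StepRN (n + 1) u w

/-!
Every string reachable from `CCA^m` has the form `CCw` with `w` over `{A, B}`. Charge each letter
`B` at index `p` of `w` the amount `c p`, where `c 0 = 1`, `c 1 = 2` and
`c (p + 2) = c p + c (p + 1) + 1`, that is, `c p = fib (p + 3) - 1`. Each rewrite step then
increases the total charge by exactly one, so the length of a rewrite sequence is the charge of its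
last string. A final `B` alone is charged `fib k - 1`, and the reachable string `CCA^(k-3)B` has no
other charge.
-/

/-- The charge of a letter `B` at index `p` of the tail `w` of `CCw`: the number of steps it takes
to turn the last letter of `CCA^(p + 1)` into `B`. -/
def flipCost (p : ℕ) : ℕ := Nat.fib (p + 3) - 1

theorem flipCost_add_two (p : ℕ) : flipCost (p + 2) = flipCost p + flipCost (p + 1) + 1 := by
  have fib_rec : Nat.fib (p + 2 + 3) = Nat.fib (p + 3) + Nat.fib (p + 1 + 3) := Nat.fib_add_two
  have fib_pos : 0 < Nat.fib (p + 3) := Nat.fib_pos.2 (by lia)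
  have fib_succ_pos : 0 < Nat.fib (p + 1 + 3) := Nat.fib_pos.2 (by lia)
  unfold flipCost
  lia

/-- The total charge of the letters `B` in the tail `w` of `CCw`, which counts the rewrite steps. -/
def potential (w : List Letter) : ℕ :=
  (w.mapIdx fun p x => if x = B then flipCost p else 0).sum

theorem potential_eq_zero {w : List Letter} (hw : B ∉ w) : potential w = 0 := by
  refine List.sum_eq_zero fun c hc => ?_
  obtain ⟨p, hp, rfl⟩ := List.mem_mapIdx.1 hc
  exact if_neg fun (letter_eq : w[p] = B) => hw (letter_eq ▸ List.getElem_mem hp)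

theorem potential_concat_B (w : List Letter) :
    potential (w ++ [B]) = potential w + flipCost w.length := by
  simp [potential, List.mapIdx_append]

/-- The rewriting that `R` induces on the tail `w` of a string `CCw` with `w` over `{A, B}`. -/
inductive TailStep : List Letter → List Letter → Prop
  | first (t : List Letter) : TailStep (A :: t) (B :: t)
  | second (t : List Letter) : TailStep (B :: A :: t) (A :: B :: t)
  | inner (s t : List Letter) : TailStep (s ++ B :: B :: A :: t) (s ++ A :: A :: B :: t)

namespace TailStep

variable {w w' : List Letter}

theorem stepR (h : TailStep w w') : StepR (C :: C :: w) (C :: C :: w') := by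
  cases h with
  | first t => exact ⟨[], t, _, _, .inr (.inr ⟨rfl, rfl⟩), rfl, rfl⟩
  | second t => exact ⟨[C], t, _, _, .inr (.inl ⟨rfl, rfl⟩), rfl, rfl⟩
  | inner s t => exact ⟨C :: C :: s, t, _, _, .inl ⟨rfl, rfl⟩, by simp, by simp⟩

theorem C_notMem (h : TailStep w w') (hw : C ∉ w) : C ∉ w' := by
  cases h <;> simpa using hw

theorem length_eq (h : TailStep w w') : w'.length = w.length := by
  cases h <;> simp

theorem potential_eq (h : TailStep w w') : potential w' = potential w + 1 := by
  cases h with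
  | first t =>
    have cost : flipCost 0 = 1 := rfl
    simp only [potential, List.mapIdx_cons, ↓reduceIte, reduceCtorEq, List.sum_cons, cost]
    lia
  | second t =>
    have cost : flipCost 1 = flipCost 0 + 1 := rfl
    simp only [potential, List.mapIdx_cons, ↓reduceIte, reduceCtorEq, List.sum_cons, zero_add, cost]
    lia
  | inner s t =>
    have cost := flipCost_add_two s.length
    simp only [potential, List.mapIdx_append, List.mapIdx_cons, ↓reduceIte, reduceCtorEq,
      List.sum_append, List.sum_cons, Nat.zero_add, Nat.reduceAdd, Nat.add_comm _ s.length]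
    lia

theorem reflTransGen_flip (p : ℕ) (t : List Letter) :
    Relation.ReflTransGen TailStep
      (List.replicate p A ++ A :: t) (List.replicate p A ++ B :: t) := by
  induction p using Nat.twoStepInduction generalizing t with
  | zero => exact .single (first t)
  | one => exact .tail (.single (first (A :: t))) (second t)
  | more p flip flip_succ =>
    -- `A^p AAA → A^p ABA → A^p BBA → A^p AAB`, each of the first two arrows being a flip.
    have flip_right := flip_succ (A :: t)
    have flip_left := flip (B :: A :: t)
    have carry := inner (List.replicate p A) t
    simp only [List.replicate_succ', List.append_assoc, List.cons_append, List.nil_append]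
      at flip_right ⊢
    exact (flip_right.trans flip_left).tail carry

end TailStep

theorem StepR.exists_tailStep {w v : List Letter} (hw : C ∉ w) (h : StepR (C :: C :: w) v) :
    ∃ w', v = C :: C :: w' ∧ TailStep w w' := by
  obtain ⟨u₁, u₂, l, r, hr, hu, rfl⟩ := h
  match u₁ with
  | [] =>
    obtain ⟨rfl, rfl, rfl⟩ : l = [C, C, A] ∧ r = [C, C, B] ∧ w = A :: u₂ := by
      rcases hr with ⟨rfl, rfl⟩ | ⟨rfl, rfl⟩ | ⟨rfl, rfl⟩ <;> simp_all
    exact ⟨_, rfl, .first u₂⟩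
  | [x] =>
    obtain ⟨rfl, rfl, rfl, rfl⟩ : C = x ∧ l = [C, B, A] ∧ r = [C, A, B] ∧ w = B :: A :: u₂ := by
      rcases hr with ⟨rfl, rfl⟩ | ⟨rfl, rfl⟩ | ⟨rfl, rfl⟩ <;> simp_all
    exact ⟨_, rfl, .second u₂⟩
  | x :: y :: s =>
    obtain ⟨rfl, rfl, rfl⟩ : C = x ∧ C = y ∧ w = s ++ (l ++ u₂) := by simpa using hu
    obtain ⟨rfl, rfl⟩ : l = [B, B, A] ∧ r = [A, A, B] := by
      rcases hr with hr | ⟨rfl, rfl⟩ | ⟨rfl, rfl⟩ <;> simp_all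
    exact ⟨s ++ A :: A :: B :: u₂, by simp, .inner s u₂⟩

theorem StepRN.exists_potential_eq {n : ℕ} {w v : List Letter} (hw : C ∉ w)
    (h : StepRN n (C :: C :: w) v) :
    ∃ w', v = C :: C :: w' ∧ C ∉ w' ∧ w'.length = w.length ∧ potential w' = potential w + n := by
  generalize hu : C :: C :: w = u at h
  induction h with
  | refl _ => exact ⟨w, hu.symm, hw, rfl, rfl⟩
  | tail _ step ih =>
    obtain ⟨w₁, rfl, hw₁, length_w₁, potential_w₁⟩ := ih hu
    obtain ⟨w₂, rfl, tail_step⟩ := step.exists_tailStep hw₁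
    refine ⟨w₂, rfl, tail_step.C_notMem hw₁, tail_step.length_eq.trans length_w₁, ?_⟩
    rw [tail_step.potential_eq, potential_w₁, Nat.add_assoc]

theorem exists_stepRN_of_reflTransGen {u v : List Letter} (h : Relation.ReflTransGen StepR u v) :
    ∃ n, StepRN n u v := by
  induction h with
  | refl => exact ⟨0, .refl u⟩
  | tail _ step ih => exact ih.imp' _ fun _ steps => steps.tail step

theorem exists_stepRN_flip_last (p : ℕ) :
    ∃ n, StepRN n (C :: C :: List.replicate (p + 1) A) (C :: C :: (List.replicate p A ++ [B])) := by
  rw [List.replicate_succ']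
  exact exists_stepRN_of_reflTransGen <|
    (TailStep.reflTransGen_flip p []).lift (C :: C :: ·) fun _ _ => TailStep.stepR

/-- For every `k ≥ 3`, the smallest possible number of `→_R` steps needed to rewrite
`CCA^{k−2}` to a string ending in `B` is exactly `fib(k) − 1`; in particular such a
rewrite sequence exists. -/
theorem min_steps_to_B (k : ℕ) (hk : 3 ≤ k) :
    (∃ v : List Letter,
        StepRN (Nat.fib k - 1) ([C, C] ++ List.replicate (k - 2) A) v ∧
        v.getLast? = some B) ∧
      ∀ (n : ℕ) (v : List Letter),
        StepRN n ([C, C] ++ List.replicate (k - 2) A) v →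
        v.getLast? = some B → Nat.fib k - 1 ≤ n := by
  obtain ⟨p, rfl⟩ := Nat.exists_eq_add_of_le' hk
  have steps_eq {n v} (h : StepRN n (C :: C :: List.replicate (p + 1) A) v) :
      ∃ w, v = C :: C :: w ∧ w.length = p + 1 ∧ potential w = n := by
    obtain ⟨w, rfl, -, length_w, potential_w⟩ := h.exists_potential_eq (by simp)
    exact ⟨w, rfl, by simpa using length_w, by simpa [potential_eq_zero] using potential_w⟩
  refine ⟨?_, fun n v h hv => ?_⟩
  · obtain ⟨n, h⟩ := exists_stepRN_flip_last p
    obtain ⟨_, ⟨⟩, -, rfl⟩ := steps_eq h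
    rw [potential_concat_B, potential_eq_zero (by simp), List.length_replicate, Nat.zero_add] at h
    exact ⟨_, h, List.getLast?_concat (l := C :: C :: List.replicate p A)⟩
  · obtain ⟨w, rfl, length_w, rfl⟩ := steps_eq h
    obtain ⟨s, x, rfl⟩ := (List.eq_nil_or_concat' w).resolve_left (by rintro rfl; simp at length_w)
    obtain rfl : x = B := by
      rwa [← List.cons_append, ← List.cons_append, List.getLast?_concat, Option.some_inj] at hv
    obtain rfl : s.length = p := by simpa using length_w
    exact potential_concat_B s ▸ Nat.le_add_left _ _
end

section
/- Define the weight of a string u = u₁u₂⋯u_k over {A,B,C} by W(u) = Σ_{i : u_i = B} (fib(i) − 1), where positions are indexed from 1. If u →_R v for strings u, v of length k such that every occurrence of the letter C in u is at position 1 or 2, then W(v) = W(u) + 1. -/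
open Letter

/-- The weight `W(u) = Σ_{i : u_i = B} (fib(i) − 1)`, positions indexed from 1
(position `i` corresponds to list index `i − 1`). -/
def weight (u : List Letter) : ℕ :=
  ∑ i ∈ Finset.range u.length,
    if u[i]? = some B then Nat.fib (i + 1) - 1 else 0

/-!
Let `w i = fib (i + 1) - 1` be the weight of a `B` at index `i`, counted from 0. The Fibonacci
recurrence becomes `w (n + 2) = w n + w (n + 1) + 1`, so `BBA → AAB` raises the weight by 1 wherever
it is applied. Since `w 0 = w 1 = 0`, a `C` at one of the first two positions may be read as a `B`
without changing the weight, and the other two rules then raise it by 1 for the same reason.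
-/

theorem getElem?_append_append_of_eq_some {α : Type*} {u₁ u u₂ : List α} {i : ℕ} {a : α}
    (h : u[i]? = some a) : (u₁ ++ u ++ u₂)[u₁.length + i]? = some a := by
  have hi : i < u.length := (List.getElem?_eq_some_iff.mp h).1
  rw [List.append_assoc, List.getElem?_append_right (Nat.le_add_right _ _),
    Nat.add_sub_cancel_left, List.getElem?_append_left hi, h]

/-- The weight carried by a letter `B` at list index `i`, that is, at position `i + 1`. -/
def indexWeight (i : ℕ) : ℕ :=
  Nat.fib (i + 1) - 1

theorem indexWeight_add_two (n : ℕ) :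
    indexWeight (n + 2) = indexWeight n + indexWeight (n + 1) + 1 := by
  have hrec : Nat.fib (n + 2 + 1) = Nat.fib (n + 1) + Nat.fib (n + 1 + 1) := Nat.fib_add_two
  have hpos₁ : 0 < Nat.fib (n + 1) := Nat.fib_pos.mpr n.succ_pos
  have hpos₂ : 0 < Nat.fib (n + 1 + 1) := Nat.fib_pos.mpr (n + 1).succ_pos
  simp only [indexWeight]
  omega

theorem indexWeight_eq_zero_of_lt_two {i : ℕ} (hi : i < 2) : indexWeight i = 0 := by
  interval_cases i <;> rfl

/-- The contribution of a factor `u` to the weight of a string in which `u` is preceded by `n`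
letters. -/
def weightFrom (n : ℕ) (u : List Letter) : ℕ :=
  ∑ i ∈ Finset.range u.length, if u[i]? = some B then indexWeight (n + i) else 0

theorem weight_eq_weightFrom_zero (u : List Letter) : weight u = weightFrom 0 u := by
  simp only [weight, weightFrom, indexWeight, Nat.zero_add]

theorem weightFrom_append (n : ℕ) (u v : List Letter) :
    weightFrom n (u ++ v) = weightFrom n u + weightFrom (n + u.length) v := by
  unfold weightFrom
  rw [List.length_append, Finset.sum_range_add]
  congr 1
  · refine Finset.sum_congr rfl fun i hi => ?_
    rw [List.getElem?_append_left (Finset.mem_range.mp hi)]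
  · refine Finset.sum_congr rfl fun i _ => ?_
    rw [List.getElem?_append_right (Nat.le_add_right _ _), Nat.add_sub_cancel_left, Nat.add_assoc]

theorem weight_append_append (u₁ u u₂ : List Letter) :
    weight (u₁ ++ u ++ u₂) =
      weight u₁ + weightFrom u₁.length u + weightFrom (u₁.length + u.length) u₂ := by
  simp only [weight_eq_weightFrom_zero, weightFrom_append, List.length_append, Nat.zero_add]

theorem weightFrom_triple (n : ℕ) (x y z : Letter) :
    weightFrom n [x, y, z] =
      (if x = B then indexWeight n else 0) + (if y = B then indexWeight (n + 1) else 0) +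
        (if z = B then indexWeight (n + 2) else 0) := by
  simp [weightFrom, Finset.sum_range_succ]

theorem RuleR.length_eq {l r : List Letter} (h : RuleR l r) : r.length = l.length := by
  rcases h with ⟨rfl, rfl⟩ | ⟨rfl, rfl⟩ | ⟨rfl, rfl⟩ <;> rfl

theorem RuleR.weightFrom_eq_add_one {n : ℕ} {l r : List Letter} (h : RuleR l r)
    (hC : ∀ i : ℕ, l[i]? = some C → n + i < 2) :
    weightFrom n r = weightFrom n l + 1 := by
  have hrec := indexWeight_add_two n
  have hzero (i : ℕ) (hi : l[i]? = some C) : indexWeight (n + i) = 0 :=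
    indexWeight_eq_zero_of_lt_two (hC i hi)
  rcases h with ⟨rfl, rfl⟩ | ⟨rfl, rfl⟩ | ⟨rfl, rfl⟩
  · simp [weightFrom_triple, hrec]
  · have h₀ : indexWeight n = 0 := hzero 0 rfl
    simp [weightFrom_triple, hrec, h₀]
  · have h₀ : indexWeight n = 0 := hzero 0 rfl
    have h₁ : indexWeight (n + 1) = 0 := hzero 1 rfl
    simp [weightFrom_triple, hrec, h₀, h₁]

theorem weight_step_general {u₁ u₂ l r : List Letter} (h : RuleR l r)
    (hC : ∀ i : ℕ, l[i]? = some C → u₁.length + i < 2) :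
    weight (u₁ ++ r ++ u₂) = weight (u₁ ++ l ++ u₂) + 1 := by
  rw [weight_append_append, weight_append_append, h.length_eq, h.weightFrom_eq_add_one hC]
  ring

/-- If `u →_R v` for strings of length `k` such that every occurrence of `C` in `u` is
at position 1 or 2, then `W(v) = W(u) + 1`. -/
theorem weight_step (k : ℕ) (u v : List Letter) (hu : u.length = k) (hv : v.length = k)
    (h : StepR u v) (hC : ∀ i : ℕ, u[i]? = some C → i < 2) :
    weight v = weight u + 1 := by
  obtain ⟨u₁, u₂, l, r, hrule, rfl, rfl⟩ := h
  exact weight_step_general hrule fun i hi => hC _ (getElem?_append_append_of_eq_some hi)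
end

section
/- Let k ≥ 3 and consider the PFA A_k. Let u be a string of length k of the shape CCw with w ∈ {A,B}^{k−2}. (i) If u →_R v for a string v, then S(u)c^i r c^{k−i} = S(v) in the power automaton of A_k, for some i < k. (ii) Conversely, if u does not end in B and there exists an i such that the symbol r is defined on every state of S(u)c^i, then u →_R v for some string v of the shape CCw' with w' ∈ {A,B}^{k−2}. -/
open Letter

/-- The three symbols of the PFA `A_k`. -/
inductive ASym : Type
  | s
  | r
  | c
  deriving DecidableEq

/-- States of `A_k`: `(t, i)` with `t = 0,1,2` standing for `A_{i+1}`, `B_{i+1}`,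
`C_{i+1}` respectively. -/
abbrev AState (k : ℕ) := Fin 3 × Fin k

/-- The transition function of the PFA `A_k` (on `3k` states, `k ≥ 3`). -/
def Adelta (k : ℕ) (hk : 3 ≤ k) : AState k → ASym → Option (AState k) := fun q x =>
  match x with
  | ASym.s => if q.2.val < 2 then some (2, q.2) else some (0, q.2)
  | ASym.c => some (q.1, ⟨(q.2.val + 1) % k, Nat.mod_lt _ (by omega)⟩)
  | ASym.r =>
    if q.2.val < 2 then
      -- i = 1,2 : A_i r undefined, B_i r = A_i, C_i r = C_i
      (if q.1.val = 0 then none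
       else if q.1.val = 1 then some (0, q.2)
       else some (2, q.2))
    else if q.2.val = 2 then
      -- i = 3 : A_3 r = B_3, B_3 r undefined, C_3 r = B_2
      (if q.1.val = 0 then some (1, q.2)
       else if q.1.val = 1 then none
       else some (1, ⟨1, by omega⟩))
    else some q

/-- The index in `Fin 3` associated to a letter. -/
def letterIdx : Letter → Fin 3
  | A => 0
  | B => 1
  | C => 2

/-- For a string `u = a₁⋯a_k`, `Sset k u` is the set of states containing `A_i` iff
`a_i = A`, `B_i` iff `a_i = B`, and `C_i` iff `a_i = C`. -/
def Sset (k : ℕ) (u : List Letter) : Set (AState k) :=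
  {q | ∃ x : Letter, u[(q.2 : ℕ)]? = some x ∧ letterIdx x = q.1}

open scoped Classical in
/-- One step of the power automaton: the image of `V` under symbol `a`, or `∅` if the
symbol is undefined on some state of `V`. -/
noncomputable def powStep {Q σ : Type*} (δ : Q → σ → Option Q) (V : Set Q) (a : σ) :
    Set Q :=
  if ∀ q ∈ V, (δ q a).isSome then {q' | ∃ q ∈ V, δ q a = some q'} else ∅

/-- The action of a word in the power automaton. -/
noncomputable def powRun {Q σ : Type*} (δ : Q → σ → Option Q) (V : Set Q) (w : List σ) :
    Set Q :=
  w.foldl (powStep δ) V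

/-!
The symbol `c` rotates a string and `r` rewrites a redex standing at the front, so conjugating `r`
by a rotation rewrites a redex at any position. Conversely, `r` is defined on a rotation of `CCw`
only if the first three letters `xyz` of the rotation satisfy `x, y ≠ A` and `z ≠ B`. If `CCw` does
not end in `B`, it ends in `A`, so these letters cannot straddle its end: `x` or `y` would be the
final `A`. Hence `xyz` is a factor of `CCw`, and `CCA`, `CBA`, `BBA` are the only such factors
possible. The result again has the shape `CCw'`, because no rule creates, deletes or moves a `C`.
-/

section PowerAutomaton

variable {Q σ : Type*} {δ : Q → σ → Option Q}

theorem powStep_range {ι : Type*} {f g : ι → Q} {a : σ} (h : ∀ j, δ (f j) a = some (g j)) :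
    powStep δ (Set.range f) a = Set.range g := by
  have hdef : ∀ q ∈ Set.range f, (δ q a).isSome := by
    rintro _ ⟨j, rfl⟩
    rw [h, Option.isSome_some]
  ext q
  simp only [powStep, if_pos hdef, Set.mem_ofPred_eq, Set.mem_range, exists_exists_eq_and, h,
    Option.some_inj]

theorem powRun_cons (V : Set Q) (a : σ) (w : List σ) :
    powRun δ V (a :: w) = powRun δ (powStep δ V a) w :=
  rfl

theorem powRun_append (V : Set Q) (w w' : List σ) :
    powRun δ V (w ++ w') = powRun δ (powRun δ V w) w' :=
  List.foldl_append

end PowerAutomaton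

theorem RuleR.length_left {l r : List Letter} (h : RuleR l r) : l.length = 3 := by
  rcases h with ⟨rfl, -⟩ | ⟨rfl, -⟩ | ⟨rfl, -⟩ <;> rfl

theorem RuleR.length_right {l r : List Letter} (h : RuleR l r) : r.length = 3 := by
  rcases h with ⟨-, rfl⟩ | ⟨-, rfl⟩ | ⟨-, rfl⟩ <;> rfl

theorem RuleR.map_decide_eq_C {l r : List Letter} (h : RuleR l r) :
    r.map (fun x => decide (x = C)) = l.map fun x => decide (x = C) := by
  rcases h with ⟨rfl, rfl⟩ | ⟨rfl, rfl⟩ | ⟨rfl, rfl⟩ <;> rfl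

theorem StepR.map_decide_eq_C {u v : List Letter} (h : StepR u v) :
    v.map (fun x => decide (x = C)) = u.map fun x => decide (x = C) := by
  obtain ⟨u₁, u₂, l, r, hR, rfl, rfl⟩ := h
  simp only [List.map_append, hR.map_decide_eq_C]

theorem StepR.length_eq {u v : List Letter} (h : StepR u v) : v.length = u.length := by
  simpa only [List.length_map] using congrArg List.length h.map_decide_eq_C

theorem StepR.exists_eq_cons_cons {w v : List Letter} (h : StepR (C :: C :: w) v)
    (hwAB : ∀ x ∈ w, x = A ∨ x = B) :
    ∃ w', v = C :: C :: w' ∧ w'.length = w.length ∧ ∀ x ∈ w', x = A ∨ x = B := by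
  obtain ⟨x, v', rfl, hx, hv'⟩ := List.map_eq_cons_iff.1 h.map_decide_eq_C
  obtain ⟨y, w', rfl, hy, hw'⟩ := List.map_eq_cons_iff.1 hv'
  obtain rfl : x = C := by simpa only [decide_true, decide_eq_true_eq] using hx
  obtain rfl : y = C := by simpa only [decide_true, decide_eq_true_eq] using hy
  refine ⟨w', rfl, by simpa only [List.length_map] using congrArg List.length hw', fun z hz => ?_⟩
  have hmem : decide (z = C) ∈ w.map fun x => decide (x = C) :=
    hw' ▸ List.mem_map_of_mem hz
  obtain ⟨x, hx, hxz⟩ := List.mem_map.1 hmem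
  have hxC : x ≠ C := by rcases hwAB x hx with rfl | rfl <;> decide
  have hzC : z ≠ C := by rwa [Ne, ← decide_eq_decide.1 hxz]
  cases z with
  | A => exact .inl rfl
  | B => exact .inr rfl
  | C => exact absurd rfl hzC

-- A redex already at the front is given `m = u.length` instead of `m = 0`, so that the number
-- `k - m` of leading symbols `c` in `StepR.exists_powRun_eq` is less than `k`.
theorem StepR.exists_rotate {u v : List Letter} (h : StepR u v) :
    ∃ m l r t, 0 < m ∧ m ≤ u.length ∧ RuleR l r ∧ u.rotate m = l ++ t ∧ v.rotate m = r ++ t := by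
  have hlen := h.length_eq
  obtain ⟨u₁, u₂, l, r, hR, rfl, rfl⟩ := h
  rcases u₁.eq_nil_or_concat with rfl | ⟨u₁, x, rfl⟩
  · refine ⟨(l ++ u₂).length, l, r, u₂, ?_, le_rfl, hR, List.rotate_length _, ?_⟩
    · rw [List.length_append, hR.length_left]
      omega
    · exact hlen ▸ List.rotate_length _
  · refine ⟨(u₁.concat x).length, l, r, u₂ ++ u₁.concat x, ?_, ?_, hR, ?_, ?_⟩
    · simp only [List.length_concat, Nat.succ_pos]
    · simp only [List.length_append]
      omega
    all_goals rw [List.append_assoc, List.rotate_append_length_eq, List.append_assoc]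

theorem getLast?_eq_A_of_ne_B {w : List Letter} (hwAB : ∀ x ∈ w, x = A ∨ x = B) (hw : w ≠ [])
    (hlast : (C :: C :: w).getLast? ≠ some B) : (C :: C :: w).getLast? = some A := by
  have hlast_w : (C :: C :: w).getLast? = some (w.getLast hw) := by
    rw [← List.getLast?_eq_some_getLast hw]
    exact List.getLast?_append_of_ne_nil [C, C] hw
  rw [hlast_w] at hlast ⊢
  exact congrArg some <| (hwAB _ (w.getLast_mem hw)).resolve_right (mt (congrArg some) hlast)

theorem exists_redex_of_rotation {w a b t : List Letter} {x y z : Letter}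
    (hwAB : ∀ x ∈ w, x = A ∨ x = B) (hlast : (C :: C :: w).getLast? = some A)
    (hab : C :: C :: w = a ++ b) (hb : b ≠ []) (hba : b ++ a = x :: y :: z :: t)
    (hx : x ≠ A) (hy : y ≠ A) (hz : z ≠ B) :
    ∃ l r b', RuleR l r ∧ b = l ++ b' := by
  have hlast_b : b.getLast? = some A := by
    rwa [hab, List.getLast?_append_of_ne_nil _ hb] at hlast
  obtain ⟨b', rfl⟩ : ∃ b', b = x :: y :: z :: b' := by
    rcases b with _ | ⟨b₀, _ | ⟨b₁, _ | ⟨b₂, b'⟩⟩⟩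
    · exact absurd rfl hb
    · have hxA : x = A := by simp_all
      exact absurd hxA hx
    · have hyA : y = A := by simp_all
      exact absurd hyA hy
    · obtain ⟨rfl, rfl, rfl, -⟩ : b₀ = x ∧ b₁ = y ∧ b₂ = z ∧ b' ++ a = t := by simpa using hba
      exact ⟨b', rfl⟩
  rcases a with _ | ⟨a₀, _ | ⟨a₁, a⟩⟩
  · obtain ⟨rfl, rfl, rfl⟩ : C = x ∧ C = y ∧ w = z :: b' := by simpa using hab
    obtain rfl : z = A := (hwAB z (by simp)).resolve_right hz
    exact ⟨_, _, b', .inr (.inr ⟨rfl, rfl⟩), rfl⟩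
  · obtain ⟨-, rfl, rfl⟩ : C = a₀ ∧ C = x ∧ w = y :: z :: b' := by simpa using hab
    obtain rfl : y = B := (hwAB y (by simp)).resolve_left hy
    obtain rfl : z = A := (hwAB z (by simp)).resolve_right hz
    exact ⟨_, _, b', .inr (.inl ⟨rfl, rfl⟩), rfl⟩
  · obtain ⟨-, -, rfl⟩ : C = a₀ ∧ C = a₁ ∧ w = a ++ x :: y :: z :: b' := by simpa using hab
    obtain rfl : x = B := (hwAB x (by simp)).resolve_left hx
    obtain rfl : y = B := (hwAB y (by simp)).resolve_left hy
    obtain rfl : z = A := (hwAB z (by simp)).resolve_right hz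
    exact ⟨_, _, b', .inl ⟨rfl, rfl⟩, rfl⟩

section Automaton

variable {k : ℕ} (hk : 3 ≤ k) {u v : List Letter}

theorem Sset_eq_range (hu : u.length = k) :
    Sset k u = Set.range fun j : Fin k => (letterIdx u[(j : ℕ)], j) := by
  ext ⟨s, j⟩
  have hj : u[(j : ℕ)]? = some u[(j : ℕ)] := List.getElem?_eq_getElem _
  simp [Sset, hj]

theorem powStep_c_Sset_rotate_one (hu : u.length = k) :
    powStep (Adelta k hk) (Sset k (u.rotate 1)) ASym.c = Sset k u := by
  have : NeZero k := ⟨by omega⟩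
  have hsucc (j : Fin k) : j + 1 = ⟨((j : ℕ) + 1) % k, Nat.mod_lt _ (by omega)⟩ :=
    Fin.ext (by rw [Fin.val_add, Fin.val_one', Nat.add_mod_mod])
  rw [Sset_eq_range ((u.length_rotate 1).trans hu), Sset_eq_range hu,
    ← (add_right_surjective (1 : Fin k)).range_comp fun j : Fin k => (letterIdx u[(j : ℕ)], j)]
  refine powStep_range fun j => ?_
  simp only [Function.comp_apply, Adelta, List.getElem_rotate, hsucc, hu]

theorem powRun_replicate_c_Sset_rotate (hu : u.length = k) (i : ℕ) :
    powRun (Adelta k hk) (Sset k (u.rotate i)) (List.replicate i ASym.c) = Sset k u := by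
  induction i with
  | zero =>
    rw [List.rotate_zero]
    rfl
  | succ i ih =>
    rw [List.replicate_succ, powRun_cons, ← List.rotate_rotate,
      powStep_c_Sset_rotate_one hk ((u.length_rotate i).trans hu), ih]

theorem powRun_replicate_c_Sset (hu : u.length = k) {i m : ℕ} (h : k ∣ m + i) :
    powRun (Adelta k hk) (Sset k u) (List.replicate i ASym.c) = Sset k (u.rotate m) := by
  obtain ⟨n, hn⟩ := h
  have hrot : (u.rotate m).rotate i = u := by
    rw [List.rotate_rotate, hn, ← hu, List.rotate_length_mul]
  simpa only [hrot] using powRun_replicate_c_Sset_rotate hk ((u.length_rotate m).trans hu) i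

theorem exists_powRun_replicate_c_Sset_eq (hu : u.length = k) (i : ℕ) :
    ∃ a b, u = a ++ b ∧ b ≠ [] ∧
      powRun (Adelta k hk) (Sset k u) (List.replicate i ASym.c) = Sset k (b ++ a) := by
  have hdvd : k ∣ (k - 1) * i + i := by
    rw [← Nat.succ_mul, Nat.succ_eq_add_one, Nat.sub_add_cancel (by omega)]
    exact Nat.dvd_mul_right k i
  set m := (k - 1) * i
  have hlt : m % u.length < u.length := Nat.mod_lt _ (by omega)
  refine ⟨u.take (m % u.length), u.drop (m % u.length), (List.take_append_drop _ _).symm, ?_, ?_⟩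
  · rw [Ne, List.drop_eq_nil_iff]
    omega
  · rw [powRun_replicate_c_Sset hk hu hdvd, List.rotate_eq_drop_append_take_mod]

theorem Adelta_r_of_three_le {q : AState k} (hq : 3 ≤ (q.2 : ℕ)) :
    Adelta k hk q ASym.r = some q := by
  simp only [Adelta]
  rw [if_neg (by omega), if_neg (by omega)]

theorem powStep_r_Sset {l r t : List Letter} (hR : RuleR l r) (hlen : (l ++ t).length = k) :
    powStep (Adelta k hk) (Sset k (l ++ t)) ASym.r = Sset k (r ++ t) := by
  have hlen' : (r ++ t).length = k := by
    simpa only [List.length_append, hR.length_left, hR.length_right] using hlen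
  rw [Sset_eq_range hlen, Sset_eq_range hlen']
  refine powStep_range fun j => ?_
  rcases lt_or_ge (j : ℕ) 3 with hj | hj
  · obtain ⟨j, hjk⟩ := j
    rcases hR with ⟨rfl, rfl⟩ | ⟨rfl, rfl⟩ | ⟨rfl, rfl⟩ <;> interval_cases j <;> rfl
  · rw [Adelta_r_of_three_le hk hj]
    simp only [List.getElem_append, hR.length_left, hR.length_right, hj.not_gt, dite_false]

theorem ne_of_r_defined {x y z : Letter} {t : List Letter}
    (h : ∀ q ∈ Sset k (x :: y :: z :: t), (Adelta k hk q ASym.r).isSome) :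
    x ≠ A ∧ y ≠ A ∧ z ≠ B := by
  refine ⟨?_, ?_, ?_⟩ <;> rintro rfl
  · simpa [Adelta] using h (0, ⟨0, by omega⟩) ⟨A, rfl, rfl⟩
  · simpa [Adelta] using h (0, ⟨1, by omega⟩) ⟨A, rfl, rfl⟩
  · simpa [Adelta] using h (1, ⟨2, by omega⟩) ⟨B, rfl, rfl⟩

theorem StepR.exists_powRun_eq (h : StepR u v) (hu : u.length = k) :
    ∃ i < k,
      powRun (Adelta k hk) (Sset k u)
          (List.replicate i ASym.c ++ [ASym.r] ++ List.replicate (k - i) ASym.c) =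
        Sset k v := by
  have hv : v.length = k := h.length_eq.trans hu
  obtain ⟨m, l, r, t, hm, hmk, hR, hul, hvr⟩ := h.exists_rotate
  have hdvd : k ∣ m + (k - m) := by rw [Nat.add_sub_of_le (by omega)]
  refine ⟨k - m, by omega, ?_⟩
  calc
    _ = powRun (Adelta k hk) (powStep (Adelta k hk) (Sset k (l ++ t)) ASym.r)
          (List.replicate m ASym.c) := by
      rw [powRun_append, powRun_append, powRun_replicate_c_Sset hk hu hdvd, hul,
        Nat.sub_sub_self (by omega)]
      rfl
    _ = powRun (Adelta k hk) (Sset k (v.rotate m)) (List.replicate m ASym.c) := by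
      rw [powStep_r_Sset hk hR (by rw [← hul, List.length_rotate, hu]), hvr]
    _ = Sset k v := powRun_replicate_c_Sset_rotate hk hv m

theorem exists_stepR_of_r_defined {w : List Letter} (hwAB : ∀ x ∈ w, x = A ∨ x = B)
    (hlen : (C :: C :: w).length = k) (hlast : (C :: C :: w).getLast? ≠ some B) {i : ℕ}
    (hdef : ∀ q ∈ powRun (Adelta k hk) (Sset k (C :: C :: w)) (List.replicate i ASym.c),
      (Adelta k hk q ASym.r).isSome) :
    ∃ v, StepR (C :: C :: w) v := by
  obtain ⟨a, b, hab, hb, hrun⟩ := exists_powRun_replicate_c_Sset_eq hk hlen i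
  obtain ⟨x, y, z, t, hba⟩ : ∃ x y z t, b ++ a = x :: y :: z :: t := by
    have hba : 3 ≤ (b ++ a).length := by
      rw [List.length_append, add_comm, ← List.length_append, ← hab, hlen]
      exact hk
    match b ++ a, hba with
    | x :: y :: z :: t, _ => exact ⟨x, y, z, t, rfl⟩
  rw [hrun, hba] at hdef
  obtain ⟨hx, hy, hz⟩ := ne_of_r_defined hk hdef
  have hw : w ≠ [] := by
    rintro rfl
    exact absurd (hlen ▸ hk) (by decide)
  have hlastA : (C :: C :: w).getLast? = some A :=
    getLast?_eq_A_of_ne_B hwAB hw hlast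
  obtain ⟨l, r, b', hR, rfl⟩ := exists_redex_of_rotation hwAB hlastA hab hb hba hx hy hz
  exact ⟨a ++ r ++ b', a, b', l, r, hR, by rw [hab, List.append_assoc], rfl⟩

end Automaton

/-- Let `k ≥ 3` and let `u = CCw` with `w ∈ {A,B}^{k−2}`.
(i) If `u →_R v`, then `S(u)c^i r c^{k−i} = S(v)` for some `i < k`.
(ii) Conversely, if `u` does not end in `B` and `r` is defined on every state of
`S(u)c^i` for some `i`, then `u →_R v` for some `v = CCw'` with `w' ∈ {A,B}^{k−2}`. -/
theorem Ak_mimics_rewriting (k : ℕ) (hk : 3 ≤ k) (u w : List Letter)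
    (hu : u = C :: C :: w) (hwlen : w.length = k - 2)
    (hwAB : ∀ x ∈ w, x = A ∨ x = B) :
    (∀ v : List Letter, StepR u v →
        ∃ i < k,
          powRun (Adelta k hk) (Sset k u)
              (List.replicate i ASym.c ++ [ASym.r] ++ List.replicate (k - i) ASym.c) =
            Sset k v) ∧
      (u.getLast? ≠ some B →
        (∃ i : ℕ, ∀ q ∈ powRun (Adelta k hk) (Sset k u) (List.replicate i ASym.c),
            (Adelta k hk q ASym.r).isSome) →
        ∃ v w' : List Letter, v = C :: C :: w' ∧ w'.length = k - 2 ∧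
          (∀ x ∈ w', x = A ∨ x = B) ∧ StepR u v) := by
  subst hu
  have hlen : (C :: C :: w).length = k := by
    simp only [List.length_cons]
    omega
  refine ⟨fun v hv => hv.exists_powRun_eq hk hlen, ?_⟩
  rintro hlast ⟨i, hdef⟩
  obtain ⟨v, hstep⟩ := exists_stepR_of_r_defined hk hwAB hlen hlast hdef
  obtain ⟨w', hv, hw'len, hw'AB⟩ := hstep.exists_eq_cons_cons hwAB
  exact ⟨v, w', hv, hw'len.trans hwlen, hw'AB, hstep⟩
end
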